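/- arXiv:2509.02874 — 6 statements merged into one kernel-verified Lean document; each statement's English description precedes it below -/
import Mathlib

section
/- For every integer n ≥ 1 and every real number α, det(I − α·A_{P_n}) = d_n(α). -/
/-- `dpoly n α = ∑_{m=0}^{⌊n/2⌋} (-1)^m C(n-m, m) α^(2m)`. -/
noncomputable def dpoly (n : ℕ) (α : ℝ) : ℝ :=
  ∑ m ∈ Finset.range (n / 2 + 1), (-1 : ℝ) ^ m * (Nat.choose (n - m) m : ℝ) * α ^ (2 * m)

/-- Adjacency matrix of the path graph on `n` vertices. -/
def pathAdj (n : ℕ) : Matrix (Fin n) (Fin n) ℝ :=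
  fun i j => if i.val + 1 = j.val ∨ j.val + 1 = i.val then 1 else 0

lemma dpoly_ext (n N : ℕ) (h : n / 2 + 1 ≤ N) (α : ℝ) :
    dpoly n α = ∑ m ∈ Finset.range N,
      (-1 : ℝ) ^ m * (Nat.choose (n - m) m : ℝ) * α ^ (2 * m) := by
  unfold dpoly
  apply Finset.sum_subset
  · intro x; simp only [Finset.mem_range]; omega
  · intro x _ hx
    simp only [Finset.mem_range] at hx
    rw [Nat.choose_eq_zero_of_lt (by omega)]
    simp

lemma dpoly_rec (n : ℕ) (α : ℝ) :
    dpoly (n + 2) α = dpoly (n + 1) α - α ^ 2 * dpoly n α := by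
  rw [dpoly_ext (n + 2) (n + 1 + 1) (by omega), dpoly_ext (n + 1) (n + 1 + 1) (by omega),
    dpoly_ext n (n + 1) (by omega), Finset.sum_range_succ', Finset.sum_range_succ' _ (n + 1),
    Finset.mul_sum, add_sub_right_comm, ← Finset.sum_sub_distrib]
  congr 1
  · apply Finset.sum_congr rfl
    intro m hm
    simp only [Finset.mem_range] at hm
    have h1 : n + 2 - (m + 1) = (n - m) + 1 := by omega
    have h2 : n + 1 - (m + 1) = n - m := by omega
    rw [h1, h2, Nat.choose_succ_succ]
    push_cast
    ring

lemma path_det_rec (n : ℕ) (α : ℝ) :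
    Matrix.det ((1 : Matrix (Fin (n + 2)) (Fin (n + 2)) ℝ) - α • pathAdj (n + 2)) =
    Matrix.det ((1 : Matrix (Fin (n + 1)) (Fin (n + 1)) ℝ) - α • pathAdj (n + 1)) -
    α ^ 2 * Matrix.det ((1 : Matrix (Fin n) (Fin n) ℝ) - α • pathAdj n) := by
  rw [Matrix.det_succ_row_zero, Fin.sum_univ_succ, Fin.sum_univ_succ]
  have hz : ∀ i : Fin n, ((1 : Matrix (Fin (n + 2)) (Fin (n + 2)) ℝ) - α • pathAdj (n + 2)) 0
      i.succ.succ = 0 := by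
    intro i
    simp [pathAdj, Matrix.one_apply, Fin.ext_iff]
  have h00 : ((1 : Matrix (Fin (n + 2)) (Fin (n + 2)) ℝ) - α • pathAdj (n + 2)) 0 0 = 1 := by
    simp [pathAdj]
  have h01 : ((1 : Matrix (Fin (n + 2)) (Fin (n + 2)) ℝ) - α • pathAdj (n + 2)) 0
      (Fin.succ 0) = -α := by
    simp [pathAdj, Matrix.one_apply, Fin.ext_iff]
  have hs : ((1 : Matrix (Fin (n + 2)) (Fin (n + 2)) ℝ) - α • pathAdj (n + 2)).submatrix
      Fin.succ (Fin.succAbove 0) = 1 - α • pathAdj (n + 1) := by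
    ext i j
    simp [pathAdj, Matrix.one_apply, Fin.ext_iff]
  have hd : Matrix.det (((1 : Matrix (Fin (n + 2)) (Fin (n + 2)) ℝ)
      - α • pathAdj (n + 2)).submatrix Fin.succ (Fin.succAbove (Fin.succ 0))) =
      -α * Matrix.det ((1 : Matrix (Fin n) (Fin n) ℝ) - α • pathAdj n) := by
    rw [Matrix.det_succ_column_zero, Fin.sum_univ_succ]
    have hc : ∀ i : Fin n, (((1 : Matrix (Fin (n + 2)) (Fin (n + 2)) ℝ)
        - α • pathAdj (n + 2)).submatrix Fin.succ (Fin.succAbove (Fin.succ 0))) i.succ 0 = 0 := by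
      intro i
      simp [pathAdj, Matrix.one_apply, Fin.ext_iff]
    have hc0 : (((1 : Matrix (Fin (n + 2)) (Fin (n + 2)) ℝ)
        - α • pathAdj (n + 2)).submatrix Fin.succ (Fin.succAbove (Fin.succ 0))) 0 0 = -α := by
      simp [pathAdj, Matrix.one_apply, Fin.ext_iff]
    have hcs : (((1 : Matrix (Fin (n + 2)) (Fin (n + 2)) ℝ)
        - α • pathAdj (n + 2)).submatrix Fin.succ (Fin.succAbove (Fin.succ 0))).submatrix
        (Fin.succAbove 0) Fin.succ = 1 - α • pathAdj n := by
      ext i j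
      simp [pathAdj, Matrix.one_apply, Fin.ext_iff]
    simp only [hc, hc0, hcs]
    simp
  simp only [hz, h00, h01, hs, hd]
  simp
  ring

lemma path_det (α : ℝ) (n : ℕ) :
    Matrix.det ((1 : Matrix (Fin n) (Fin n) ℝ) - α • pathAdj n) = dpoly n α := by
  induction n using Nat.strong_induction_on with
  | _ n ih =>
    match n, ih with
    | 0, _ => simp [dpoly]
    | 1, _ => simp [dpoly, pathAdj]
    | n + 2, ih =>
      rw [path_det_rec, dpoly_rec, ih (n + 1) (by omega), ih n (by omega)]

theorem stmt0 (n : ℕ) (hn : 1 ≤ n) (α : ℝ) :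
    Matrix.det ((1 : Matrix (Fin n) (Fin n) ℝ) - α • pathAdj n) = dpoly n α := by
  exact path_det α n
end

section
/- For every integer n > 4 and every real number α with 0 < α < 1/2, det(I − α·A_{C_n}) = d_{n−1}(α) − 2α^n − 2α²·d_{n−2}(α). -/
/-- Adjacency matrix of the cycle graph on `n` vertices. -/
def cycleAdj (n : ℕ) : Matrix (Fin n) (Fin n) ℝ :=
  fun i j => if (i.val + 1) % n = j.val ∨ (j.val + 1) % n = i.val then 1 else 0

lemma dpoly_closed (x : ℝ) (n : ℕ) :
    dpoly n (x / (1 + x ^ 2)) * ((1 - x ^ 2) * (1 + x ^ 2) ^ n) = 1 - x ^ (2 * n + 2) := by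
  have hx : (1 + x ^ 2) ≠ 0 := by positivity
  induction n using Nat.twoStepInduction with
  | zero => simp [dpoly]
  | one => simp [dpoly]; ring
  | more n h1 h2 =>
    rw [dpoly_rec]
    have : (dpoly (n + 1) (x / (1 + x ^ 2)) - (x / (1 + x ^ 2)) ^ 2 * dpoly n (x / (1 + x ^ 2)))
        * ((1 - x ^ 2) * (1 + x ^ 2) ^ (n + 2))
        = (1 + x ^ 2) * (dpoly (n + 1) (x / (1 + x ^ 2)) * ((1 - x ^ 2) * (1 + x ^ 2) ^ (n + 1)))
          - x ^ 2 * (dpoly n (x / (1 + x ^ 2)) * ((1 - x ^ 2) * (1 + x ^ 2) ^ n)) := by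
      generalize dpoly (n + 1) (x / (1 + x ^ 2)) = a
      generalize dpoly n (x / (1 + x ^ 2)) = b
      field_simp
      ring
    rw [this, h1, h2]
    ring

/-- The cyclic shift matrix. -/
def shiftMat (n : ℕ) : Matrix (Fin n) (Fin n) ℝ :=
  fun i j => if (i.val + 1) % n = j.val then 1 else 0

lemma mod_cases (n : ℕ) (i : Fin n) :
    (i.val + 1 < n ∧ (i.val + 1) % n = i.val + 1) ∨ (i.val + 1 = n ∧ (i.val + 1) % n = 0) := by
  rcases Nat.lt_or_ge (i.val + 1) n with h | h
  · exact Or.inl ⟨h, Nat.mod_eq_of_lt h⟩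
  · have : i.val + 1 = n := by omega
    exact Or.inr ⟨this, by rw [this]; simp⟩

lemma cycleAdj_eq (n : ℕ) (hn : 2 < n) : cycleAdj n = shiftMat n + (shiftMat n).transpose := by
  ext i j
  simp only [cycleAdj, shiftMat, Matrix.add_apply, Matrix.transpose_apply]
  have hi := mod_cases n i
  have hj := mod_cases n j
  have : ¬ ((i.val + 1) % n = j.val ∧ (j.val + 1) % n = i.val) := by omega
  by_cases h1 : (i.val + 1) % n = j.val <;> by_cases h2 : (j.val + 1) % n = i.val <;>
    simp_all

lemma shift_mul (n : ℕ) : shiftMat n * (shiftMat n).transpose = 1 := by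
  ext i j
  simp only [Matrix.mul_apply, shiftMat, Matrix.transpose_apply, Matrix.one_apply]
  have hi := mod_cases n i
  have hj := mod_cases n j
  rw [Finset.sum_eq_single (⟨(i.val + 1) % n, Nat.mod_lt _ (by omega)⟩ : Fin n)]
  · have : (j.val + 1) % n = (i.val + 1) % n ↔ i = j := by
      rw [Fin.ext_iff]; omega
    simp [this]
  · intro b _ hb
    have : (i.val + 1) % n ≠ b.val := fun h => hb (Fin.ext h.symm)
    simp [this]
  · simp

lemma det_shift (n : ℕ) (x : ℝ) :
    Matrix.det (1 - x • shiftMat (n + 2)) = 1 - x ^ (n + 2) := by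
  rw [Matrix.det_succ_column_zero, Fin.sum_univ_succ, Fin.sum_univ_castSucc,
    Finset.sum_eq_zero]
  · have hA : ((1 - x • shiftMat (n + 2)).submatrix (Fin.succAbove 0) Fin.succ).det = 1 := by
      rw [Matrix.det_of_isUpperTriangular]
      · apply Finset.prod_eq_one
        intro i _
        have := mod_cases (n + 2) i.succ
        have h : ¬ ((i.val + 1 + 1) % (n + 2) = i.val + 1) := by
          rw [Fin.val_succ] at this; omega
        simp [shiftMat, h]
      · intro i j hij
        have hij' : j.val < i.val := hij
        have := mod_cases (n + 2) i.succ
        have h : ¬ ((i.val + 1 + 1) % (n + 2) = j.val + 1) := by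
          rw [Fin.val_succ] at this; omega
        have h3 : i ≠ j := by rintro rfl; omega
        simp [shiftMat, h, Matrix.one_apply, h3]
    have hB : ((1 - x • shiftMat (n + 2)).submatrix (Fin.succAbove (Fin.last (n + 1)))
        Fin.succ).det = (-x) ^ (n + 1) := by
      rw [Matrix.det_of_isLowerTriangular]
      · rw [Finset.prod_eq_pow_card (b := -x)]
        · simp
        intro i _
        have h : (i.val + 1) % (n + 2) = i.val + 1 := Nat.mod_eq_of_lt (by omega)
        simp [shiftMat, h, Matrix.one_apply, Fin.ext_iff]
      · intro i j hij
        have hij' : i.val < j.val := hij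
        have h : (i.val + 1) % (n + 2) = i.val + 1 := Nat.mod_eq_of_lt (by omega)
        have h3 : i.val ≠ j.val := by omega
        have h4 : i.val ≠ j.val + 1 := by omega
        simp [shiftMat, h, Matrix.one_apply, Fin.ext_iff, h3, h4]
    rw [hA, Fin.succ_last, hB]
    have e : (-1 : ℝ) ^ (n + 1) * (-1) ^ (n + 1) = 1 := by
      rw [← mul_pow]; simp
    simp [shiftMat, Matrix.one_apply, Fin.ext_iff]
    rw [neg_pow x]
    linear_combination (-x ^ (n + 2)) * e
  · intro i _
    have h : (i.val + 1 + 1) % (n + 2) = i.val + 1 + 1 := Nat.mod_eq_of_lt (by omega)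
    simp [shiftMat, h, Matrix.one_apply, Fin.ext_iff]

lemma det_cycle (n : ℕ) (x : ℝ) :
    Matrix.det ((1 : Matrix (Fin (n + 3)) (Fin (n + 3)) ℝ) - (x / (1 + x ^ 2)) • cycleAdj (n + 3))
      * (1 + x ^ 2) ^ (n + 3) = (1 - x ^ (n + 3)) ^ 2 := by
  have hx : (1 + x ^ 2) ≠ 0 := by positivity
  have h : (1 + x ^ 2) • ((1 : Matrix (Fin (n + 3)) (Fin (n + 3)) ℝ)
      - (x / (1 + x ^ 2)) • cycleAdj (n + 3))
      = (1 - x • shiftMat (n + 3)) * (1 - x • shiftMat (n + 3)).transpose := by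
    rw [cycleAdj_eq _ (by omega), smul_sub, smul_smul, mul_div_cancel₀ _ hx]
    simp only [Matrix.transpose_sub, Matrix.transpose_smul, Matrix.transpose_one, sub_mul, mul_sub,
      one_mul, mul_one, Matrix.smul_mul, Matrix.mul_smul, shift_mul]
    module
  have h2 := congrArg Matrix.det h
  rw [Matrix.det_smul, Matrix.det_mul, Matrix.det_transpose, det_shift (n + 1)] at h2
  simp only [Fintype.card_fin] at h2
  rw [mul_comm, h2]
  ring

theorem stmt1 (n : ℕ) (hn : 4 < n) (α : ℝ) (hα0 : 0 < α) (hα1 : α < 1 / 2) :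
    Matrix.det ((1 : Matrix (Fin n) (Fin n) ℝ) - α • cycleAdj n)
      = dpoly (n - 1) α - 2 * α ^ n - 2 * α ^ 2 * dpoly (n - 2) α := by
  obtain ⟨k, rfl⟩ : ∃ k, n = k + 3 := ⟨n - 3, by omega⟩
  obtain ⟨x, hx1, rfl⟩ : ∃ x : ℝ, 1 - x ^ 2 ≠ 0 ∧ α = x / (1 + x ^ 2) := by
    have hp : 0 < 1 - 4 * α ^ 2 := by nlinarith
    have hs := Real.sq_sqrt hp.le
    have hs0 := Real.sqrt_pos.2 hp
    set s := Real.sqrt (1 - 4 * α ^ 2)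
    have hq : α * (1 + ((1 - s) / (2 * α)) ^ 2) = (1 - s) / (2 * α) := by
      field_simp
      nlinarith
    have hx : (1 + ((1 - s) / (2 * α)) ^ 2) ≠ 0 := by positivity
    refine ⟨(1 - s) / (2 * α), ?_, by rw [eq_div_iff hx, hq]⟩
    intro h
    generalize (1 - s) / (2 * α) = y at *
    have h5 : y ^ 2 = 1 := by linarith
    rw [h5] at hq
    nlinarith
  have hx : (1 + x ^ 2) ≠ 0 := by positivity
  have hd := det_cycle k x
  have h1 := dpoly_closed x (k + 2)
  have h2 := dpoly_closed x (k + 1)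
  have e1 : k + 3 - 1 = k + 2 := by omega
  have e2 : k + 3 - 2 = k + 1 := by omega
  rw [e1, e2]
  apply mul_right_cancel₀ (mul_ne_zero hx1 (pow_ne_zero (k + 3) hx))
  have e3 : (x / (1 + x ^ 2)) * (1 + x ^ 2) = x := div_mul_cancel₀ _ hx
  have e4 : (x / (1 + x ^ 2)) ^ (k + 3) * (1 + x ^ 2) ^ (k + 3) = x ^ (k + 3) := by
    rw [← mul_pow, e3]
  have e5 : (x / (1 + x ^ 2)) ^ 2 * (1 + x ^ 2) ^ 2 = x ^ 2 := by
    rw [← mul_pow, e3]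
  generalize Matrix.det ((1 : Matrix (Fin (k + 3)) (Fin (k + 3)) ℝ)
    - (x / (1 + x ^ 2)) • cycleAdj (k + 3)) = D at *
  generalize dpoly (k + 2) _ = a at *
  generalize dpoly (k + 1) _ = b at *
  generalize (x / (1 + x ^ 2)) ^ (k + 3) = p at *
  generalize (x / (1 + x ^ 2)) ^ 2 = q at *
  linear_combination (1 - x ^ 2) * hd - (1 + x ^ 2) * h1 + 2 * (1 - x ^ 2) * e4
    + 2 * x ^ 2 * h2 + 2 * b * (1 - x ^ 2) * (1 + x ^ 2) ^ (k + 1) * e5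
end

section
/- Fix a real α with 0 < α < 1/2 and integers 1 ≤ i ≤ j. Then, as n → ∞ (over n ≥ j), the (i,j) entry of (I − α·A_{P_n})^{-1} converges to α^{j−i}·d_{i−1}(α)·(2/(1 + √(1 − 4α²)))^j. In particular, for i < j the Katz similarity index K_{P_n}(α)_{i,j} converges to this limit as n → ∞. -/
/-- Lucas-type closed form. -/
noncomputable def lucF (x y : ℝ) (k : ℕ) : ℝ := (x ^ k - y ^ k) / (x - y)

lemma dpoly_eq_range (n : ℕ) (α : ℝ) : dpoly n α =
    ∑ m ∈ Finset.range (n + 1), (-1 : ℝ) ^ m * (Nat.choose (n - m) m : ℝ) * α ^ (2 * m) := by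
  unfold dpoly
  apply Finset.sum_subset
  · intro m hm
    simp only [Finset.mem_range] at *
    omega
  · intro m hm hm'
    simp only [Finset.mem_range] at *
    rw [Nat.choose_eq_zero_of_lt (by omega)]
    simp

lemma dpoly_closed_s12 (α x y : ℝ) (hxy : x ≠ y) (h1 : x + y = 1) (h2 : α ^ 2 = x * y) (n : ℕ) :
    dpoly n α = lucF x y (n + 1) := by
  have hs : x - y ≠ 0 := sub_ne_zero.mpr hxy
  induction n using Nat.twoStepInduction with
  | zero => simp [dpoly, lucF, hs]
  | one =>
    have : x ^ 2 - y ^ 2 = x - y := by linear_combination (x - y) * h1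
    simp [dpoly, lucF, this, hs]
  | more n ih1 ih2 =>
    rw [dpoly_rec, ih1, ih2, h2]
    unfold lucF
    field_simp
    have hy : y = 1 - x := by linarith
    subst hy
    ring

lemma lucF_rec (α x y : ℝ) (h1 : x + y = 1) (h2 : α ^ 2 = x * y) (k : ℕ) :
    lucF x y (k + 2) = lucF x y (k + 1) - α ^ 2 * lucF x y k := by
  rw [h2]
  unfold lucF
  have hy : y = 1 - x := by linarith
  subst hy
  ring

lemma lucF_add (α x y : ℝ) (hxy : x ≠ y) (h2 : α ^ 2 = x * y) (p m : ℕ) :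
    lucF x y (p + 1) * lucF x y (m + 1) - α ^ 2 * lucF x y p * lucF x y m
      = lucF x y (p + m + 1) := by
  have hs : x - y ≠ 0 := sub_ne_zero.mpr hxy
  rw [h2]
  unfold lucF
  field_simp
  ring

lemma lucF_pos (x y : ℝ) (hy : 0 < y) (hxy : y < x) (k : ℕ) : 0 < lucF x y (k + 1) := by
  unfold lucF
  apply div_pos
  · have := pow_lt_pow_left₀ hxy hy.le (show k + 1 ≠ 0 by omega)
    linarith
  · linarith

lemma path_sum (n : ℕ) (G : ℕ → ℝ) (h0 : G 0 = 0) (hn : G (n + 1) = 0) (a : Fin n) :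
    ∑ k : Fin n, pathAdj n a k * G (k.val + 1) = G a.val + G (a.val + 2) := by
  obtain ⟨a, ha⟩ := a
  have h : ∀ k : Fin n, pathAdj n ⟨a, ha⟩ k * G (k.val + 1) =
      (fun k : ℕ => (if k = a + 1 then G (k + 1) else 0) +
        (if k + 1 = a then G (k + 1) else 0)) k.val := by
    intro k
    simp only [pathAdj]
    split_ifs <;> first | omega | simp
  rw [Finset.sum_congr rfl (fun k _ => h k), Fin.sum_univ_eq_sum_range
    (fun k : ℕ => (if k = a + 1 then G (k + 1) else 0) +
        (if k + 1 = a then G (k + 1) else 0)), Finset.sum_add_distrib, add_comm]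
  congr 1
  · rcases a with _ | a
    · simp [h0]
    · simp only [Nat.add_right_cancel_iff]
      rw [Finset.sum_ite_eq']
      simp; intro; omega
  · rw [Finset.sum_ite_eq']
    simp only [Finset.mem_range]
    split_ifs with h
    · rfl
    · have : a + 2 = n + 1 := by omega
      rw [this, hn]

/-- Column of the inverse, 1-indexed and extended by zero. -/
noncomputable def colG (α x y : ℝ) (n q p : ℕ) : ℝ :=
  if p ≤ q then α ^ (q - p) * lucF x y p * lucF x y (n + 1 - q) / lucF x y (n + 1)
  else α ^ (p - q) * lucF x y q * lucF x y (n + 1 - p) / lucF x y (n + 1)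

lemma colG_eq (α x y : ℝ) (hy : 0 < y) (hxy : y < x) (h1 : x + y = 1) (h2 : α ^ 2 = x * y)
    (n a b : ℕ) (ha : a < n) (hb : b < n) :
    colG α x y n (b + 1) (a + 1) - α * (colG α x y n (b + 1) a + colG α x y n (b + 1) (a + 2))
      = if a = b then 1 else 0 := by
  have hp := (lucF_pos x y hy hxy n).ne'
  have hr := lucF_rec α x y h1 h2
  rcases lt_trichotomy a b with h | h | h
  · obtain ⟨c, rfl⟩ := Nat.exists_eq_add_of_lt h
    have e0 : a + c + 1 + 1 - (a + 1) = c + 1 := by omega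
    have e1 : a + c + 1 + 1 - a = c + 2 := by omega
    have e2 : a + c + 1 + 1 - (a + 2) = c := by omega
    simp only [colG]
    rw [if_pos (by omega), if_pos (by omega), if_pos (by omega), if_neg (by omega), e0, e1, e2,
      hr a]
    ring
  · subst h
    obtain ⟨m, rfl⟩ := Nat.exists_eq_add_of_lt ha
    have e0 : a + m + 1 + 1 - (a + 1) = m + 1 := by omega
    have e1 : a + m + 1 + 1 - (a + 2) = m := by omega
    have e2 : a + 1 - a = 1 := by omega
    have e3 : a + 2 - (a + 1) = 1 := by omega
    have hadd := lucF_add α x y hxy.ne' h2 (a + 1) m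
    have e4 : a + 1 + m + 1 = a + m + 1 + 1 := by omega
    rw [e4, hr a] at hadd
    simp only [colG]
    rw [if_pos (by omega), if_pos (by omega), if_neg (by omega), if_pos trivial, e0, e1, e2, e3,
      Nat.sub_self]
    field_simp
    linear_combination hadd
  · obtain ⟨c, rfl⟩ := Nat.exists_eq_add_of_lt h
    obtain ⟨m, rfl⟩ := Nat.exists_eq_add_of_lt ha
    have e0 : b + c + 1 + 1 - (b + 1) = c + 1 := by omega
    have e1 : b + c + 1 + 2 - (b + 1) = c + 2 := by omega
    have e2 : b + c + 1 + m + 1 + 1 - (b + c + 1 + 1) = m + 1 := by omega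
    have e3 : b + c + 1 + m + 1 + 1 - (b + c + 1 + 2) = m := by omega
    have e4 : b + c + 1 + m + 1 + 1 - (b + c + 1) = m + 2 := by omega
    have e5 : b + c + 1 - (b + 1) = c := by omega
    have e6 : b + c + 1 + m + 1 + 1 - (b + 1) = c + m + 2 := by omega
    have key : colG α x y (b + c + 1 + m + 1) (b + 1) (b + c + 1) =
        α ^ c * lucF x y (b + 1) * lucF x y (m + 2) / lucF x y (b + c + 1 + m + 1 + 1) := by
      simp only [colG]
      split_ifs with hh
      · have : c = 0 := by omega
        subst this
        rw [e6]; simp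
      · rw [e5, e4]
    rw [key]
    simp only [colG]
    rw [if_neg (by omega), if_neg (by omega), if_neg (by omega), e0, e1, e2, e3, hr m]
    ring

lemma inv_entry (α x y : ℝ) (hy : 0 < y) (hxy : y < x) (h1 : x + y = 1) (h2 : α ^ 2 = x * y)
    (n : ℕ) : ((1 : Matrix (Fin n) (Fin n) ℝ) - α • pathAdj n)⁻¹ =
      Matrix.of fun a b => colG α x y n (b.val + 1) (a.val + 1) := by
  apply Matrix.inv_eq_right_inv
  ext a b
  rw [Matrix.sub_mul, Matrix.one_mul, Matrix.smul_mul, Matrix.sub_apply, Matrix.smul_apply,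
    Matrix.mul_apply]
  simp only [Matrix.of_apply, smul_eq_mul]
  rw [path_sum n (fun p => colG α x y n (b.val + 1) p), Matrix.one_apply,
    colG_eq α x y hy hxy h1 h2 n a b a.2 b.2]
  · simp [Fin.ext_iff]
  · simp [colG, lucF]
  · have := b.2
    simp only [colG]
    rw [if_neg (by omega)]
    simp [lucF]

lemma ratio_tendsto (x y : ℝ) (hy : 0 < y) (hxy : y < x) (j : ℕ) :
    Filter.Tendsto (fun N : ℕ => lucF x y (N + 1) / lucF x y (j + N + 1)) Filter.atTop
      (nhds ((1 / x) ^ j)) := by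
  have hx : 0 < x := hy.trans hxy
  have hq : Filter.Tendsto (fun N : ℕ => (y / x) ^ N) Filter.atTop (nhds 0) :=
    tendsto_pow_atTop_nhds_zero_of_lt_one (by positivity) ((div_lt_one hx).mpr hxy)
  have ha : Filter.Tendsto (fun N : ℕ => (y / x) ^ (N + 1)) Filter.atTop (nhds 0) :=
    (Filter.tendsto_add_atTop_iff_nat 1).mpr hq
  have hb : Filter.Tendsto (fun N : ℕ => (y / x) ^ (N + (j + 1))) Filter.atTop (nhds 0) :=
    (Filter.tendsto_add_atTop_iff_nat (j + 1)).mpr hq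
  have hc := ((ha.const_sub 1).div (hb.const_sub 1) (by norm_num)).const_mul ((1 / x) ^ j)
  simp only [sub_zero, div_one, mul_one] at hc
  refine hc.congr fun N => ?_
  have hpos := lucF_pos x y hy hxy (j + N)
  have hs : x - y ≠ 0 := by linarith
  have hlt := pow_lt_pow_left₀ hxy hy.le (Nat.succ_ne_zero (j + N))
  have hne : x ^ (j + N + 1) - y ^ (j + N + 1) ≠ 0 := by
    simp only [Nat.succ_eq_add_one] at hlt; linarith
  have hx0 := hx.ne'
  have f1 : 1 - (y / x) ^ (N + 1) = (x ^ (N + 1) - y ^ (N + 1)) / x ^ (N + 1) := by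
    rw [div_pow]; field_simp
  have f2 : 1 - (y / x) ^ (N + (j + 1)) =
      (x ^ (j + N + 1) - y ^ (j + N + 1)) / (x ^ (N + 1) * x ^ j) := by
    rw [div_pow, show N + (j + 1) = j + N + 1 by ring, ← pow_add,
      show N + 1 + j = j + N + 1 by ring]
    field_simp
  simp only [Pi.div_apply]
  rw [f1, f2, lucF, lucF, div_div_div_cancel_right₀ hs, one_div, inv_pow]
  field_simp

theorem stmt12 (α : ℝ) (hα0 : 0 < α) (hα1 : α < 1 / 2)
    (i j : ℕ) (hi : 1 ≤ i) (hij : i ≤ j) :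
    Filter.Tendsto
        (fun N : ℕ =>
          (((1 : Matrix (Fin (j + N)) (Fin (j + N)) ℝ) - α • pathAdj (j + N))⁻¹)
            ⟨i - 1, by omega⟩ ⟨j - 1, by omega⟩)
        Filter.atTop
        (nhds (α ^ (j - i) * dpoly (i - 1) α *
          (2 / (1 + Real.sqrt (1 - 4 * α ^ 2))) ^ j)) ∧
      (i < j →
        Filter.Tendsto
          (fun N : ℕ =>
            (((1 : Matrix (Fin (j + N)) (Fin (j + N)) ℝ) - α • pathAdj (j + N))⁻¹ - 1)
              ⟨i - 1, by omega⟩ ⟨j - 1, by omega⟩)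
          Filter.atTop
          (nhds (α ^ (j - i) * dpoly (i - 1) α *
            (2 / (1 + Real.sqrt (1 - 4 * α ^ 2))) ^ j))) := by
  have hs2 : 0 < 1 - 4 * α ^ 2 := by nlinarith
  have hmain : Filter.Tendsto
        (fun N : ℕ =>
          (((1 : Matrix (Fin (j + N)) (Fin (j + N)) ℝ) - α • pathAdj (j + N))⁻¹)
            ⟨i - 1, by omega⟩ ⟨j - 1, by omega⟩)
        Filter.atTop
        (nhds (α ^ (j - i) * dpoly (i - 1) α *
          (2 / (1 + Real.sqrt (1 - 4 * α ^ 2))) ^ j)) := by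
    have hs := Real.sqrt_pos.mpr hs2
    have hsq := Real.sq_sqrt hs2.le
    set s := Real.sqrt (1 - 4 * α ^ 2) with hsdef
    have hs1 : s < 1 := by nlinarith [pow_pos hα0 2]
    obtain ⟨x, hx⟩ : ∃ x, x = (1 + s) / 2 := ⟨_, rfl⟩
    obtain ⟨y, hy⟩ : ∃ y, y = (1 - s) / 2 := ⟨_, rfl⟩
    have hy0 : 0 < y := by rw [hy]; linarith
    have hxy : y < x := by rw [hx, hy]; linarith
    have h1 : x + y = 1 := by rw [hx, hy]; ring
    have h2 : α ^ 2 = x * y := by rw [hx, hy]; linear_combination (1 / 4) * hsq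
    have hlim : 2 / (1 + s) = 1 / x := by rw [hx]; field_simp
    rw [hlim, dpoly_closed_s12 α x y hxy.ne' h1 h2, Nat.sub_add_cancel hi]
    refine ((ratio_tendsto x y hy0 hxy j).const_mul _).congr fun N => ?_
    rw [inv_entry α x y hy0 hxy h1 h2]
    simp only [Matrix.of_apply, colG]
    rw [if_pos (by omega), Nat.sub_add_cancel hi, Nat.sub_add_cancel (hi.trans hij),
      show j + N + 1 - j = N + 1 by omega]
    ring
  refine ⟨hmain, fun hlt => hmain.congr fun N => ?_⟩
  rw [Matrix.sub_apply, Matrix.one_apply_ne, sub_zero]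
  simp only [ne_eq, Fin.mk.injEq]
  omega
end

section
/- Fix a real α with 0 < α < 1/2 and an integer m ≥ 1, and set β = 2/(1 + √(1 − 4α²)). Then, as n → ∞ (over n ≥ 4m + 1), the Katz similarity index K_{C_n}(α)_{1,1+2m} between vertex 1 and vertex 1+2m of the cycle C_n converges to (α^{2m}/(1 − 4α²))·β^{2m−2}·(1 − α⁴·β⁴). -/
def cpred {n : ℕ} (j : Fin n) : Fin n := ⟨if j.val = 0 then n - 1 else j.val - 1, by
  have := j.2
  split_ifs <;> omega⟩

def csucc {n : ℕ} (j : Fin n) : Fin n := ⟨if j.val + 1 = n then 0 else j.val + 1, by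
  have := j.2
  split_ifs <;> omega⟩

lemma mod_succ_eq {n a b : ℕ} (ha : a < n) :
    (a + 1) % n = b ↔ (a + 1 = n ∧ b = 0) ∨ (a + 1 < n ∧ b = a + 1) := by
  rcases Nat.lt_or_ge (a + 1) n with h | h
  · rw [Nat.mod_eq_of_lt h]; omega
  · have : a + 1 = n := by omega
    rw [this, Nat.mod_self]; omega

lemma cycleAdj_eq_s13 {n : ℕ} (hn : 3 ≤ n) (i j : Fin n) :
    cycleAdj n i j = (if i = cpred j then 1 else 0) + (if i = csucc j then 1 else 0) := by
  have hi := i.2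
  have hj := j.2
  unfold cycleAdj
  simp only [mod_succ_eq hi, mod_succ_eq hj, Fin.ext_iff, cpred, csucc]
  split_ifs <;> first | (exfalso; omega) | norm_num

lemma sum_cycleAdj {n : ℕ} (hn : 3 ≤ n) (v : Fin n → ℝ) (j : Fin n) :
    ∑ i, v i * cycleAdj n i j = v (cpred j) + v (csucc j) := by
  simp [cycleAdj_eq_s13 hn, mul_add, Finset.sum_add_distrib]

lemma det_ne {n : ℕ} (hn : 3 ≤ n) (α : ℝ) (h0 : 0 < α) (h1 : α < 1 / 2) :
    ((1 : Matrix (Fin n) (Fin n) ℝ) - α • cycleAdj n).det ≠ 0 := by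
  apply det_ne_zero_of_sum_col_lt_diag
  intro j
  have hd : cycleAdj n j j = 0 := by
    have hj := j.2
    unfold cycleAdj
    rw [if_neg]
    simp only [mod_succ_eq hj]
    omega
  have hs : ∑ i, ‖α * cycleAdj n i j‖ = 2 * α := by
    have := sum_cycleAdj hn (fun _ => α) j
    rw [two_mul, ← this]
    apply Finset.sum_congr rfl
    intro i _
    rw [Real.norm_of_nonneg]
    apply mul_nonneg h0.le
    unfold cycleAdj
    split_ifs <;> norm_num
  have : ∑ i ∈ Finset.univ.erase j, ‖((1 : Matrix (Fin n) (Fin n) ℝ) - α • cycleAdj n) i j‖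
      ≤ ∑ i, ‖α * cycleAdj n i j‖ := by
    refine le_trans (le_of_eq ?_) (Finset.sum_le_sum_of_subset_of_nonneg
      (Finset.erase_subset j Finset.univ) (fun _ _ _ => norm_nonneg _))
    apply Finset.sum_congr rfl
    intro i hi
    have : i ≠ j := Finset.ne_of_mem_erase hi
    simp [Matrix.one_apply_ne this]
  have h2 : ‖((1 : Matrix (Fin n) (Fin n) ℝ) - α • cycleAdj n) j j‖ = 1 := by
    simp [hd]
  rw [h2]
  linarith

lemma inv_entry_s13 {n : ℕ} (hn : 3 ≤ n) (t : ℝ) (h0 : 0 < t) (h1 : t < 1) (k : Fin n)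
    (z : Fin n) (hz : z.val = 0) :
    ((1 : Matrix (Fin n) (Fin n) ℝ) - (t / (1 + t ^ 2)) • cycleAdj n)⁻¹ z k
      = (1 + t ^ 2) / ((1 - t ^ 2) * (1 - t ^ n)) * (t ^ k.val + t ^ (n - k.val)) := by
  set α := t / (1 + t ^ 2) with hα
  set c := (1 + t ^ 2) / ((1 - t ^ 2) * (1 - t ^ n)) with hc
  have hp : (0 : ℝ) < 1 + t ^ 2 := by positivity
  have hα0 : 0 < α := by positivity
  have hα1 : α < 1 / 2 := by
    rw [hα, div_lt_div_iff₀ hp (by norm_num)]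
    nlinarith [sq_pos_of_pos (sub_pos.2 h1)]
  have hdet := det_ne hn α hα0 hα1
  set M := (1 : Matrix (Fin n) (Fin n) ℝ) - α • cycleAdj n with hM
  set v : Fin n → ℝ := fun k => c * (t ^ k.val + t ^ (n - k.val)) with hv
  have ht2 : 1 - t ^ 2 ≠ 0 := by nlinarith
  have htn : 1 - t ^ n ≠ 0 := by
    have := pow_lt_one₀ h0.le h1 (show n ≠ 0 by omega)
    linarith
  have key : Matrix.vecMul v M = Pi.single z 1 := by
    funext j
    have e : Matrix.vecMul v M j = v j - α * (v (cpred j) + v (csucc j)) := by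
      rw [← sum_cycleAdj hn, hM, Matrix.vecMul_sub, Matrix.vecMul_one, Matrix.vecMul_smul]
      simp [Matrix.vecMul, dotProduct]
    rw [e]
    have hj := j.2
    by_cases hj0 : j.val = 0
    · have : j = z := Fin.ext (by omega)
      subst this
      rw [Pi.single_eq_same]
      have h1n : ¬ (0 + 1 = n) := by omega
      obtain ⟨q, rfl⟩ : ∃ q, n = q + 1 := ⟨n - 1, by omega⟩
      have hq : q + 1 - q = 1 := by omega
      simp only [hv, cpred, csucc, hj0, h1n, if_true, if_false, Nat.add_sub_cancel, hq,
        Nat.sub_zero, zero_add, pow_one, pow_zero, hc, hα]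
      have hw : t ^ (q + 1) = t ^ q * t := pow_succ t q
      rw [hw] at htn
      simp only [hw]
      generalize t ^ q = w at htn ⊢
      have htn2 : 1 - t * w ≠ 0 := by rwa [mul_comm]
      field_simp
      ring
    · have : j ≠ z := fun h => hj0 (by rw [h, hz])
      rw [Pi.single_eq_of_ne this]
      have a1 : v (cpred j) = c * (t ^ (j.val - 1) + t ^ (n - (j.val - 1))) := by
        simp [hv, cpred, hj0]
      have a2 : v (csucc j) = c * (t ^ (j.val + 1) + t ^ (n - (j.val + 1))) := by
        by_cases h : j.val + 1 = n
        · simp [hv, csucc, h, add_comm]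
        · simp [hv, csucc, h]
      rw [a1, a2]
      obtain ⟨p, hp'⟩ : ∃ p, j.val = p + 1 := ⟨j.val - 1, by omega⟩
      obtain ⟨q, hq⟩ : ∃ q, n = j.val + 1 + q := ⟨n - (j.val + 1), by omega⟩
      have b1 : n - (j.val - 1) = q + 2 := by omega
      have b2 : n - (j.val + 1) = q := by omega
      have b3 : n - j.val = q + 1 := by omega
      simp only [hv, b1, b2, b3]
      rw [hp', hα]
      simp only [Nat.add_sub_cancel]
      field_simp
      ring
  have hu : IsUnit M.det := isUnit_iff_ne_zero.2 hdet
  have : v = Matrix.vecMul (Pi.single z 1) M⁻¹ := by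
    rw [← key, Matrix.vecMul_vecMul, Matrix.mul_nonsing_inv _ hu, Matrix.vecMul_one]
  have h3 := congrFun this k
  rw [Matrix.single_one_vecMul] at h3
  exact h3.symm

theorem stmt13 (α : ℝ) (hα0 : 0 < α) (hα1 : α < 1 / 2) (m : ℕ) (hm : 1 ≤ m)
    (β : ℝ) (hβ : β = 2 / (1 + Real.sqrt (1 - 4 * α ^ 2))) :
    Filter.Tendsto
      (fun N : ℕ =>
        (((1 : Matrix (Fin (4 * m + 1 + N)) (Fin (4 * m + 1 + N)) ℝ)
            - α • cycleAdj (4 * m + 1 + N))⁻¹ - 1)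
          ⟨0, by omega⟩ ⟨2 * m, by omega⟩)
      Filter.atTop
      (nhds ((α ^ (2 * m) / (1 - 4 * α ^ 2)) * β ^ (2 * m - 2) * (1 - α ^ 4 * β ^ 4))) := by
  set s := Real.sqrt (1 - 4 * α ^ 2) with hs
  have hpos : 0 < 1 - 4 * α ^ 2 := by nlinarith
  have hs0 : 0 < s := Real.sqrt_pos.2 hpos
  have hs2 : s ^ 2 = 1 - 4 * α ^ 2 := Real.sq_sqrt hpos.le
  obtain ⟨t, ht⟩ : ∃ t, t = α * β := ⟨_, rfl⟩
  have hβ0 : 0 < β := by rw [hβ]; positivity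
  have hβs : β * (1 + s) = 2 := by rw [hβ]; field_simp
  have ht0 : 0 < t := by rw [ht]; positivity
  have hβt : β = 1 + t ^ 2 := by
    have : (1 + s) ^ 2 * (1 + t ^ 2) = (1 + s) ^ 2 * β := by
      have h4 : (1 + s) ^ 2 * t ^ 2 = 4 * α ^ 2 := by
        rw [ht]; linear_combination α ^ 2 * (β * (1 + s) + 2) * hβs
      linear_combination h4 - (1 + s) * hβs + hs2
    exact (mul_left_cancel₀ (by positivity) this).symm
  have ht1 : t < 1 := by
    have : β < 2 := by nlinarith
    rw [hβt] at this
    nlinarith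
  have hαt : α = t / (1 + t ^ 2) := by
    rw [← hβt, ht]; field_simp
  have ht2 : 1 - t ^ 2 ≠ 0 := by nlinarith
  have hp : (0 : ℝ) < 1 + t ^ 2 := by positivity
  have hlim : (α ^ (2 * m) / (1 - 4 * α ^ 2)) * β ^ (2 * m - 2) * (1 - α ^ 4 * β ^ 4)
      = (1 + t ^ 2) / ((1 - t ^ 2) * (1 - 0)) * (t ^ (2 * m) + 0) := by
    obtain ⟨q, rfl⟩ : ∃ q, m = q + 1 := ⟨m - 1, by omega⟩
    have e1 : 2 * (q + 1) - 2 = 2 * q := by omega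
    have e2 : 1 - 4 * α ^ 2 = (1 - t ^ 2) ^ 2 / (1 + t ^ 2) ^ 2 := by
      rw [hαt]; field_simp; ring
    have e3 : α ^ 4 * β ^ 4 = t ^ 4 := by rw [ht]; ring
    have e4 : α ^ (2 * (q + 1)) * β ^ (2 * q) = t ^ (2 * q) * α ^ 2 := by rw [ht]; ring
    rw [e1, e3, div_mul_eq_mul_div, e4, e2, hαt]
    field_simp
    ring
  rw [hlim]
  have hT : Filter.Tendsto (fun N : ℕ => t ^ N) Filter.atTop (nhds 0) :=
    tendsto_pow_atTop_nhds_zero_of_lt_one ht0.le ht1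
  have hA : Filter.Tendsto (fun N : ℕ => t ^ (4 * m + 1 + N)) Filter.atTop (nhds 0) :=
    hT.comp (Filter.tendsto_atTop_mono (fun N => by simp) Filter.tendsto_id)
  have hB : Filter.Tendsto (fun N : ℕ => t ^ (4 * m + 1 + N - 2 * m)) Filter.atTop (nhds 0) :=
    hT.comp (Filter.tendsto_atTop_mono (fun N => by simp only [id]; omega) Filter.tendsto_id)
  have hmain : Filter.Tendsto (fun N : ℕ => (1 + t ^ 2) / ((1 - t ^ 2) * (1 - t ^ (4 * m + 1 + N)))
      * (t ^ (2 * m) + t ^ (4 * m + 1 + N - 2 * m))) Filter.atTop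
      (nhds ((1 + t ^ 2) / ((1 - t ^ 2) * (1 - 0)) * (t ^ (2 * m) + 0))) :=
    (tendsto_const_nhds.div (tendsto_const_nhds.mul (tendsto_const_nhds.sub hA))
      (by simpa using ht2)).mul (tendsto_const_nhds.add hB)
  refine hmain.congr (fun N => ?_)
  rw [Matrix.sub_apply, Matrix.one_apply_ne (by rw [Ne, Fin.ext_iff]; simp only []; omega), sub_zero,
    hαt, inv_entry_s13 (by omega) t ht0 ht1 _ _ rfl]
end

section
/- Let n > 4 and let α be real with 0 < α < 1/2. Then for all i, j, i', j' ∈ {1,…,n} with i ≠ j and i' ≠ j', one has K_{C_n}(α)_{i,j} < K_{C_n}(α)_{i',j'} if and only if min(|i−j|, n−|i−j|) > min(|i'−j'|, n−|i'−j'|). (Since the graph distance in C_n between vertices i and j is min(|i−j|, n−|i−j|) and the effective resistance is a strictly increasing function of this distance on the relevant range, the Katz similarity index, the resistance distance, and the graph distance rank all node pairs of the cycle in the same order.) -/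
def katzF (n : ℕ) (r : ℝ) (d : ℕ) : ℝ := r ^ d + r ^ (n - d)

def katzD {n : ℕ} (i j : Fin n) : ℕ := ((i.val : ℤ) - j.val).natAbs

theorem katzF_congr (n : ℕ) (r : ℝ) (a b : ℕ) (h : a = b ∨ a + b = n) :
    katzF n r a = katzF n r b := by
  rcases h with h | h
  · rw [h]
  · unfold katzF
    have h1 : n - a = b := by omega
    have h2 : n - b = a := by omega
    rw [h1, h2, add_comm]

theorem katzF_rec (n : ℕ) (r α : ℝ) (h : α * (1 + r ^ 2) = r) (d : ℕ) (hd : d + 2 ≤ n) :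
    katzF n r (d + 1) = α * (katzF n r d + katzF n r (d + 2)) := by
  unfold katzF
  obtain ⟨m, rfl⟩ := Nat.exists_eq_add_of_le hd
  have h1 : d + 2 + m - (d + 1) = m + 1 := by omega
  have h2 : d + 2 + m - d = m + 2 := by omega
  have h3 : d + 2 + m - (d + 2) = m := by omega
  rw [h1, h2, h3]
  linear_combination (-(r ^ d + r ^ m)) * h

theorem katzF_zero (n : ℕ) (hn : 4 < n) (r α : ℝ) (h : α * (1 + r ^ 2) = r) :
    (1 + r ^ 2) * (katzF n r 0 - α * (2 * katzF n r 1)) = (1 - r ^ 2) * (1 - r ^ n) := by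
  unfold katzF
  obtain ⟨m, rfl⟩ := Nat.exists_eq_add_of_le' (show 1 ≤ n by omega)
  have h1 : m + 1 - 1 = m := by omega
  rw [h1, Nat.sub_zero]
  linear_combination (-2 * (r + r ^ m)) * h

theorem katzF_anti (n : ℕ) (r : ℝ) (h0 : 0 < r) (h1 : r < 1) (a b : ℕ) (hab : a < b)
    (hb : a + b < n) : katzF n r b < katzF n r a := by
  unfold katzF
  obtain ⟨m, hm⟩ := Nat.exists_eq_add_of_lt hb
  have e1 : n - b = (m + 1) + a := by omega
  have e2 : n - a = (m + 1) + b := by omega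
  rw [e1, e2, pow_add, pow_add r (m + 1) b]
  have h2 : r ^ b < r ^ a := pow_lt_pow_right_of_lt_one₀ h0 h1 hab
  have h3 : r ^ (m + 1) < 1 := pow_lt_one₀ h0.le h1 (by omega)
  nlinarith [mul_pos (sub_pos.2 h2) (sub_pos.2 h3)]

theorem cycleAdj_sum (n : ℕ) (hn : 4 < n) (i : Fin n) (g : Fin n → ℝ) :
    ∑ k, cycleAdj n i k * g k =
      g ⟨if i.val + 1 = n then 0 else i.val + 1, by have := i.2; split_ifs <;> omega⟩
      + g ⟨if i.val = 0 then n - 1 else i.val - 1, by have := i.2; split_ifs <;> omega⟩ := by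
  set s : Fin n := ⟨if i.val + 1 = n then 0 else i.val + 1, by have := i.2; split_ifs <;> omega⟩
    with hs
  set p : Fin n := ⟨if i.val = 0 then n - 1 else i.val - 1, by have := i.2; split_ifs <;> omega⟩
    with hp
  have key : ∀ k, cycleAdj n i k * g k = (if k = s then g k else 0) + (if k = p then g k else 0) := by
    intro k
    have hi := i.2
    have hk := k.2
    have e : ∀ a b : ℕ, a < n → b < n → ((a + 1) % n = b ↔
        (a + 1 = n ∧ b = 0) ∨ (a + 1 = b)) := by
      intro a b ha hb
      rcases Nat.lt_or_ge (a + 1) n with h | h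
      · rw [Nat.mod_eq_of_lt h]; omega
      · have : a + 1 = n := by omega
        rw [this, Nat.mod_self]; omega
    have c1 : ((i.val + 1) % n = k.val) ↔ k = s := by
      rw [e _ _ hi hk, hs, Fin.ext_iff]
      simp only
      split_ifs <;> omega
    have c2 : ((k.val + 1) % n = i.val) ↔ k = p := by
      rw [e _ _ hk hi, hp, Fin.ext_iff]
      simp only
      split_ifs <;> omega
    have c3 : s ≠ p := by
      rw [hs, hp, Ne, Fin.ext_iff]
      simp only
      split_ifs <;> omega
    unfold cycleAdj
    simp only [c1, c2]
    by_cases h1 : k = s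
    · have h2 : k ≠ p := fun h => c3 (h1 ▸ h)
      simp [h1, c3]
    · by_cases h2 : k = p <;> simp [h1, h2, c3.symm]
  rw [Finset.sum_congr rfl (fun k _ => key k), Finset.sum_add_distrib]
  simp

theorem katz_inv (n : ℕ) (hn : 4 < n) (r α : ℝ) (h0 : 0 < r) (h1 : r < 1)
    (h : α * (1 + r ^ 2) = r) :
    ((1 : Matrix (Fin n) (Fin n) ℝ) - α • cycleAdj n)⁻¹ =
      Matrix.of fun i j => (1 + r ^ 2) / ((1 - r ^ 2) * (1 - r ^ n)) * katzF n r (katzD i j) := by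
  apply Matrix.inv_eq_right_inv
  have hn1 : r ^ n < 1 := pow_lt_one₀ h0.le h1 (by omega)
  have h21 : r ^ 2 < 1 := pow_lt_one₀ h0.le h1 (by omega)
  have hne : (1 - r ^ 2) * (1 - r ^ n) ≠ 0 :=
    (mul_pos (sub_pos.2 h21) (sub_pos.2 hn1)).ne'
  have hz := katzF_zero n hn r α h
  set c := (1 + r ^ 2) / ((1 - r ^ 2) * (1 - r ^ n)) with hc
  ext i j
  rw [sub_mul, one_mul, Matrix.smul_mul, Matrix.sub_apply, Matrix.smul_apply, Matrix.mul_apply,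
    cycleAdj_sum n hn i]
  simp only [Matrix.of_apply, smul_eq_mul]
  have hi := i.2
  have hj := j.2
  by_cases hij : i = j
  · subst hij
    rw [Matrix.one_apply_eq, katzF_congr n r (katzD i i) 0 (by left; simp [katzD]),
      katzF_congr n r (katzD _ i) 1 (by simp only [katzD]; split_ifs <;> omega),
      katzF_congr n r (katzD _ i) 1 (by simp only [katzD]; split_ifs <;> omega)]
    have : c * ((1 - r ^ 2) * (1 - r ^ n)) = 1 + r ^ 2 := by rw [hc]; exact div_mul_cancel₀ _ hne
    have h5 : (1 + r ^ 2) ≠ 0 := by positivity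
    apply mul_left_cancel₀ h5
    linear_combination c * hz + this
  · rw [Matrix.one_apply_ne hij]
    have hv : i.val ≠ j.val := fun h => hij (Fin.ext h)
    obtain ⟨d, hd⟩ : ∃ d, katzD i j = d + 1 := ⟨katzD i j - 1, by simp only [katzD]; omega⟩
    have hd2 : d + 2 ≤ n := by simp only [katzD] at hd; omega
    have hr := katzF_rec n r α h d hd2
    rw [hd]
    simp only [katzD] at hd
    rcases lt_or_gt_of_ne hv with hl | hl
    · rw [katzF_congr n r (katzD _ j) d (by simp only [katzD]; split_ifs <;> omega),
        katzF_congr n r (katzD _ j) (d + 2) (by simp only [katzD]; split_ifs <;> omega)]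
      linear_combination c * hr
    · rw [katzF_congr n r (katzD _ j) (d + 2) (by simp only [katzD]; split_ifs <;> omega),
        katzF_congr n r (katzD _ j) d (by simp only [katzD]; split_ifs <;> omega)]
      linear_combination c * hr

theorem katz_root (α : ℝ) (hα0 : 0 < α) (hα1 : α < 1 / 2) :
    ∃ r : ℝ, 0 < r ∧ r < 1 ∧ α * (1 + r ^ 2) = r := by
  have hcont : ContinuousOn (fun r : ℝ => r - α * (1 + r ^ 2)) (Set.Icc 0 1) := by fun_prop
  have := intermediate_value_Ioo (zero_le_one' ℝ) hcont
  obtain ⟨r, hr, h⟩ := this (show (0 : ℝ) ∈ _ by constructor <;> norm_num <;> linarith)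
  exact ⟨r, hr.1, hr.2, by simp only at h; linarith⟩

theorem stmt15 (n : ℕ) (hn : 4 < n) (α : ℝ) (hα0 : 0 < α) (hα1 : α < 1 / 2)
    (i j i' j' : ℕ)
    (hi : 1 ≤ i) (hin : i ≤ n) (hj : 1 ≤ j) (hjn : j ≤ n)
    (hi' : 1 ≤ i') (hin' : i' ≤ n) (hj' : 1 ≤ j') (hjn' : j' ≤ n)
    (hne : i ≠ j) (hne' : i' ≠ j') :
    (((1 : Matrix (Fin n) (Fin n) ℝ) - α • cycleAdj n)⁻¹ - 1)
        ⟨i - 1, by omega⟩ ⟨j - 1, by omega⟩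
      < (((1 : Matrix (Fin n) (Fin n) ℝ) - α • cycleAdj n)⁻¹ - 1)
          ⟨i' - 1, by omega⟩ ⟨j' - 1, by omega⟩
    ↔ min ((i : ℤ) - j).natAbs (n - ((i : ℤ) - j).natAbs)
        > min ((i' : ℤ) - j').natAbs (n - ((i' : ℤ) - j').natAbs) := by
  obtain ⟨r, h0, h1, h⟩ := katz_root α hα0 hα1
  have hn1 : r ^ n < 1 := pow_lt_one₀ h0.le h1 (by omega)
  have h21 : r ^ 2 < 1 := pow_lt_one₀ h0.le h1 (by omega)
  have hc : 0 < (1 + r ^ 2) / ((1 - r ^ 2) * (1 - r ^ n)) :=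
    div_pos (by positivity) (mul_pos (sub_pos.2 h21) (sub_pos.2 hn1))
  rw [katz_inv n hn r α h0 h1 h, Matrix.sub_apply, Matrix.sub_apply,
    Matrix.one_apply_ne (by rw [Ne, Fin.mk.injEq]; omega),
    Matrix.one_apply_ne (by rw [Ne, Fin.mk.injEq]; omega), sub_zero, sub_zero,
    Matrix.of_apply, Matrix.of_apply, mul_lt_mul_iff_right₀ hc]
  set m := min ((i : ℤ) - j).natAbs (n - ((i : ℤ) - j).natAbs) with hm
  set m' := min ((i' : ℤ) - j').natAbs (n - ((i' : ℤ) - j').natAbs) with hm'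
  rw [katzF_congr n r _ m (by simp only [katzD]; omega),
    katzF_congr n r (katzD (n := n) ⟨i' - 1, _⟩ _) m' (by simp only [katzD]; omega)]
  have hmn : 2 * m ≤ n := by omega
  have hmn' : 2 * m' ≤ n := by omega
  constructor
  · intro hlt
    by_contra hcon
    rcases Nat.lt_or_ge m m' with hh | hh
    · exact absurd (katzF_anti n r h0 h1 m m' hh (by omega)) (not_lt.2 hlt.le)
    · have : m = m' := by omega
      rw [this] at hlt
      exact lt_irrefl _ hlt
  · intro hlt
    exact katzF_anti n r h0 h1 m' m hlt (by omega)
end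

section
/- Let α be real with 0 < α < 1/2, and let i, k, n be integers with i ≥ 1, k ≥ 1, and n − k − 2i − 1 ≥ 0. Then K_{P_n}(α)_{i,i+k} ≤ K_{P_n}(α)_{i+1,i+k+1}. -/
/-- Chebyshev-like sequence. -/
noncomputable def uu (c : ℝ) : ℕ → ℝ
  | 0 => 0
  | 1 => 1
  | (m+2) => c * uu c (m+1) - uu c m

lemma uu_rec (c : ℝ) (m : ℕ) : uu c (m+2) = c * uu c (m+1) - uu c m := by rw [uu]

lemma uu_zero (c : ℝ) : uu c 0 = 0 := by rw [uu]
lemma uu_one (c : ℝ) : uu c 1 = 1 := by rw [uu]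

lemma uu_mono (c : ℝ) (hc : 2 < c) (m : ℕ) : 0 ≤ uu c m ∧ uu c m + 1 ≤ uu c (m+1) := by
  induction m with
  | zero => simp [uu_zero, uu_one]
  | succ m ih =>
    obtain ⟨h1, h2⟩ := ih
    refine ⟨by linarith, ?_⟩
    rw [uu_rec]
    nlinarith

lemma uu_diff (c : ℝ) (d a : ℕ) :
    uu c (a+1) * uu c (a+d) - uu c a * uu c (a+d+1) = uu c d := by
  induction a with
  | zero => simp [uu_zero, uu_one]
  | succ a ih =>
    rw [← ih, show a + 1 + 1 = a + 2 by rfl, show a + 1 + d + 1 = a + d + 2 by ring,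
      show a + 1 + d = a + d + 1 by ring, uu_rec, uu_rec]
    ring

lemma uu_add (c : ℝ) (j l : ℕ) :
    uu c (j+1) * uu c (l+1) - uu c j * uu c l = uu c (j+l+1) := by
  induction j generalizing l with
  | zero => simp [uu_zero, uu_one]
  | succ j ih =>
    rw [show j + 1 + l + 1 = j + (l+1) + 1 by ring, ← ih (l+1), show j + 1 + 1 = j + 2 by rfl, uu_rec c j, show l + 1 + 1 = l + 2 by rfl, uu_rec c l]
    ring

lemma pathAdj_sum (n : ℕ) (f : ℕ → ℝ) (h0 : f 0 = 0) (h1 : f (n+1) = 0) (a : Fin n) :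
    ∑ c : Fin n, pathAdj n a c * f (c.val+1) = f a.val + f (a.val+2) := by
  have ha := a.isLt
  have e : ∀ c : Fin n, pathAdj n a c * f (c.val+1) =
      (fun x : ℕ => (if a.val + 1 = x then f (x+1) else 0) +
        (if x + 1 = a.val then f (x+1) else 0)) c.val := by
    intro c
    unfold pathAdj
    by_cases p : a.val + 1 = c.val
    · have : ¬ (c.val + 1 = a.val) := by omega
      simp [p, this]
    · simp [p]
  rw [Finset.sum_congr rfl (fun c _ => e c), Fin.sum_univ_eq_sum_range (fun x : ℕ => (if a.val + 1 = x then f (x+1) else 0) +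
        (if x + 1 = a.val then f (x+1) else 0)) n, Finset.sum_add_distrib, Finset.sum_ite_eq, add_comm]
  congr 1
  · rcases hA : a.val with _ | b
    · simp [h0]
    · have : b < n := by omega
      simp [this]
  · split_ifs with h
    · rfl
    · have : a.val + 1 = n := by
        simp at h; omega
      rw [show a.val + 2 = n + 1 by omega, h1]

/-- Unnormalised Green function. -/
noncomputable def gg (c : ℝ) (n a b : ℕ) : ℝ :=
  if a ≤ b then uu c a * uu c (n+1-b) else uu c b * uu c (n+1-a)

lemma gg_rec (c : ℝ) (n a b : ℕ) (ha : a < n) (hb : b < n) :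
    c * gg c n (a+1) (b+1) - (gg c n a (b+1) + gg c n (a+2) (b+1)) =
      if a = b then uu c (n+1) else 0 := by
  unfold gg
  rcases lt_trichotomy a b with h | h | h
  · rw [if_pos (by omega), if_pos (by omega), if_pos (by omega), if_neg (by omega), uu_rec]
    ring
  · subst h
    obtain ⟨l, rfl⟩ : ∃ l, n = a + l + 1 := ⟨n - a - 1, by omega⟩
    rw [if_pos le_rfl, if_pos (by omega), if_neg (by omega), if_pos rfl,
      show a + l + 1 + 1 - (a + 1) = l + 1 by omega,
      show a + l + 1 + 1 - (a + 2) = l by omega,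
      show a + l + 1 + 1 = (a + 1) + l + 1 by omega, ← uu_add, uu_rec]
    ring
  · obtain ⟨l, rfl⟩ : ∃ l, n = a + l + 1 := ⟨n - a - 1, by omega⟩
    have hg : (if a ≤ b + 1 then uu c a * uu c (a + l + 1 + 1 - (b + 1))
        else uu c (b + 1) * uu c (a + l + 1 + 1 - a)) = uu c (b + 1) * uu c (l + 2) := by
      by_cases hab : a ≤ b + 1
      · obtain rfl : a = b + 1 := by omega
        rw [if_pos le_rfl, show b + 1 + l + 1 + 1 - (b + 1) = l + 2 by omega]
      · rw [if_neg hab, show a + l + 1 + 1 - a = l + 2 by omega]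
    rw [hg, if_neg (by omega), if_neg (by omega), if_neg (by omega),
      show a + l + 1 + 1 - (a + 1) = l + 1 by omega,
      show a + l + 1 + 1 - (a + 2) = l by omega, uu_rec]
    ring

lemma inv_eq (α : ℝ) (hα0 : 0 < α) (hα1 : α < 1 / 2) (n : ℕ) :
    ((1 : Matrix (Fin n) (Fin n) ℝ) - α • pathAdj n)⁻¹ =
      Matrix.of fun a b => gg α⁻¹ n (a.val+1) (b.val+1) / (α * uu α⁻¹ (n+1)) := by
  have hc : 2 < α⁻¹ := by
    rw [lt_inv_comm₀ (by norm_num) hα0]; linarith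
  have hu : 0 < uu α⁻¹ (n+1) := by
    have := uu_mono _ hc n; linarith
  apply Matrix.inv_eq_right_inv
  ext a b
  rw [sub_mul, one_mul, Matrix.smul_mul, Matrix.sub_apply, Matrix.smul_apply, Matrix.mul_apply]
  have hs := pathAdj_sum n (fun x => gg α⁻¹ n x (b.val+1) / (α * uu α⁻¹ (n+1)))
    (by simp [gg, uu_zero]) (by
      have : ¬ (n ≤ b.val) := by omega
      simp [gg, uu_zero, this]) a
  simp only [Matrix.of_apply]
  rw [hs, smul_eq_mul, Matrix.one_apply]
  have h := gg_rec α⁻¹ n a.val b.val a.isLt b.isLt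
  simp only [Fin.ext_iff]
  have e : gg α⁻¹ n (a.val+1) (b.val+1) = α * (α⁻¹ * gg α⁻¹ n (a.val+1) (b.val+1)) := by
    field_simp
  rw [e, sub_eq_iff_eq_add.mp h]
  generalize uu α⁻¹ (n+1) = U at *
  split_ifs <;> field_simp <;> ring

theorem stmt17 (α : ℝ) (hα0 : 0 < α) (hα1 : α < 1 / 2) (n i k : ℕ)
    (hi : 1 ≤ i) (hk : 1 ≤ k) (hn : k + 2 * i + 1 ≤ n) :
    (((1 : Matrix (Fin n) (Fin n) ℝ) - α • pathAdj n)⁻¹ - 1)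
        ⟨i - 1, by omega⟩ ⟨i + k - 1, by omega⟩
      ≤ (((1 : Matrix (Fin n) (Fin n) ℝ) - α • pathAdj n)⁻¹ - 1)
          ⟨i, by omega⟩ ⟨i + k, by omega⟩ := by
  have hc : 2 < α⁻¹ := by
    rw [lt_inv_comm₀ (by norm_num) hα0]; linarith
  have hu : 0 < uu α⁻¹ (n+1) := by
    have := uu_mono _ hc n; linarith
  rw [inv_eq α hα0 hα1, Matrix.sub_apply, Matrix.sub_apply, Matrix.one_apply_ne, Matrix.one_apply_ne]
  · simp only [Matrix.of_apply, sub_zero]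
    gcongr
    obtain ⟨d, rfl⟩ : ∃ d, n = k + 2 * i + d := ⟨n - (k + 2 * i), by omega⟩
    unfold gg
    rw [if_pos (by omega), if_pos (by omega), show i - 1 + 1 = i by omega,
      show k + 2 * i + d + 1 - (i + k - 1 + 1) = i + d + 1 by omega,
      show k + 2 * i + d + 1 - (i + k + 1) = i + d by omega]
    have := uu_diff α⁻¹ d i
    have := (uu_mono _ hc d).1
    linarith
  · simp only [ne_eq, Fin.mk.injEq]; omega
  · simp only [ne_eq, Fin.mk.injEq]; omega
end
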